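/- arXiv:2209.12885 — 2 statements merged into one kernel-verified Lean document; each statement's English description precedes it below -/
import Mathlib

section
/- The Black–Scholes call price C(t,x) = x Φ(d₁(t,x)) − K e^{−r(T−t)} Φ(d₂(t,x)) satisfies the Black–Scholes partial differential equation ∂C/∂t (t,x) + (σ² x² / 2) ∂²C/∂x² (t,x) + r x ∂C/∂x (t,x) − r C(t,x) = 0 for every (t,x) ∈ [0,T) × (0,∞). -/
open MeasureTheory Real

/-- Standard normal density. -/
noncomputable def stdGaussianPDF (z : ℝ) : ℝ :=
  (Real.sqrt (2 * Real.pi))⁻¹ * Real.exp (-z ^ 2 / 2)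

/-- Standard normal cumulative distribution function. -/
noncomputable def stdGaussianCDF (x : ℝ) : ℝ :=
  ∫ z in Set.Iic x, stdGaussianPDF z

/-- `d₁` in the Black–Scholes formula. -/
noncomputable def bsD1 (r σ K T t x : ℝ) : ℝ :=
  (Real.log (x / K) + (r + σ ^ 2 / 2) * (T - t)) / (σ * Real.sqrt (T - t))

/-- `d₂` in the Black–Scholes formula. -/
noncomputable def bsD2 (r σ K T t x : ℝ) : ℝ :=
  bsD1 r σ K T t x - σ * Real.sqrt (T - t)

/-- Black–Scholes call price. -/
noncomputable def bsCall (r σ K T t x : ℝ) : ℝ :=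
  x * stdGaussianCDF (bsD1 r σ K T t x)
    - K * Real.exp (-(r * (T - t))) * stdGaussianCDF (bsD2 r σ K T t x)

/-!
With `v = σ √(T - t)`, the point `d₁` is chosen so that `x φ(d₁) = K e^{-r(T-t)} φ(d₁ - v)`.
Hence, when the price `x Φ(d₁) - K e^{-r(T-t)} Φ(d₁ - v)` is differentiated, the terms containing
the derivative of `d₁` cancel. This leaves `∂C/∂x = Φ(d₁)` and
`∂C/∂t = -r K e^{-r(T-t)} Φ(d₂) - x φ(d₁) σ / (2 √(T - t))`, and the last term of `∂C/∂t`
cancels the diffusion term, while the rest is `r C - r x ∂C/∂x`.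
-/

open Set Filter Topology

theorem hasDerivAt_setIntegral_Iic {E : Type*} [NormedAddCommGroup E] [NormedSpace ℝ E]
    [CompleteSpace E] {f : ℝ → E} {b c : ℝ} (hf : IntegrableOn f (Iic c)) (hbc : b < c)
    (hcont : ContinuousAt f b) :
    HasDerivAt (fun u => ∫ z in Iic u, f z) (f b) b := by
  have hIic {u : ℝ} (hu : u ≤ c) : IntegrableOn f (Iic u) := hf.mono_set (Iic_subset_Iic.2 hu)
  have hmeas : StronglyMeasurableAtFilter f (𝓝 b) := ⟨Iic c, Iic_mem_nhds hbc, hf.1⟩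
  have hFTC : HasDerivAt (fun u => ∫ z in b..u, f z) (f b) b :=
    intervalIntegral.integral_hasDerivAt_right IntervalIntegrable.refl hmeas hcont
  refine (hFTC.const_add (∫ z in Iic b, f z)).congr_of_eventuallyEq ?_
  filter_upwards [Iic_mem_nhds hbc] with u hu
  rw [← intervalIntegral.integral_Iic_sub_Iic (hIic hbc.le) (hIic hu), add_sub_cancel]

theorem hasDerivAt_mul_comp_sub_mul_comp_sub_of_mul_eq {𝕜 : Type*} [NontriviallyNormedField 𝕜]
    {Φ a k d v : 𝕜 → 𝕜} {φ₁ φ₂ a' k' v' s : 𝕜}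
    (hΦ₁ : HasDerivAt Φ φ₁ (d s)) (hΦ₂ : HasDerivAt Φ φ₂ (d s - v s))
    (ha : HasDerivAt a a' s) (hk : HasDerivAt k k' s)
    (hd : DifferentiableAt 𝕜 d s) (hv : HasDerivAt v v' s) (hbal : a s * φ₁ = k s * φ₂) :
    HasDerivAt (fun u => a u * Φ (d u) - k u * Φ (d u - v u))
      (a' * Φ (d s) - k' * Φ (d s - v s) + a s * φ₁ * v') s := by
  have h₁ : HasDerivAt (fun u => Φ (d u)) (φ₁ * deriv d s) s := hΦ₁.comp s hd.hasDerivAt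
  have h₂ : HasDerivAt (fun u => Φ (d u - v u)) (φ₂ * (deriv d s - v')) s :=
    hΦ₂.comp s (hd.hasDerivAt.sub hv)
  refine ((ha.mul h₁).sub (hk.mul h₂)).congr_deriv ?_
  linear_combination (deriv d s - v') * hbal

theorem stdGaussianPDF_eq_gaussianPDFReal :
    stdGaussianPDF = ProbabilityTheory.gaussianPDFReal 0 1 := by
  ext z
  simp [stdGaussianPDF, ProbabilityTheory.gaussianPDFReal]

theorem continuous_stdGaussianPDF : Continuous stdGaussianPDF := by
  unfold stdGaussianPDF
  fun_prop

theorem integrable_stdGaussianPDF : Integrable stdGaussianPDF :=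
  stdGaussianPDF_eq_gaussianPDFReal ▸ ProbabilityTheory.integrable_gaussianPDFReal 0 1

theorem stdGaussianPDF_sub (z a : ℝ) :
    stdGaussianPDF (z - a) = stdGaussianPDF z * exp (z * a - a ^ 2 / 2) := by
  rw [stdGaussianPDF, stdGaussianPDF, mul_assoc, ← exp_add]
  ring_nf

theorem hasDerivAt_stdGaussianCDF (z : ℝ) :
    HasDerivAt stdGaussianCDF (stdGaussianPDF z) z :=
  hasDerivAt_setIntegral_Iic integrable_stdGaussianPDF.integrableOn (lt_add_one z)
    continuous_stdGaussianPDF.continuousAt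

section BlackScholes

variable {r σ K T t x : ℝ}

theorem bsD1_mul_mul_sqrt (hσ : σ ≠ 0) (htT : t < T) :
    bsD1 r σ K T t x * (σ * √(T - t)) = log (x / K) + (r + σ ^ 2 / 2) * (T - t) :=
  div_mul_cancel₀ _ (mul_ne_zero hσ (sqrt_pos.2 (sub_pos.2 htT)).ne')

theorem mul_stdGaussianPDF_bsD1 (hσ : σ ≠ 0) (htT : t < T) (hxK : 0 < x / K) :
    x * stdGaussianPDF (bsD1 r σ K T t x)
      = K * exp (-(r * (T - t))) * stdGaussianPDF (bsD2 r σ K T t x) := by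
  have hK : K ≠ 0 := (div_ne_zero_iff.1 hxK.ne').2
  have hexponent : bsD1 r σ K T t x * (σ * √(T - t)) - (σ * √(T - t)) ^ 2 / 2
      = log (x / K) + r * (T - t) := by
    rw [bsD1_mul_mul_sqrt hσ htT, mul_pow, sq_sqrt (sub_pos.2 htT).le]
    ring
  rw [bsD2, stdGaussianPDF_sub, hexponent, exp_add, exp_log hxK, exp_neg]
  field_simp

theorem hasDerivAt_bsD1_spot (hxK : x / K ≠ 0) :
    HasDerivAt (fun y => bsD1 r σ K T t y) (1 / (x * (σ * √(T - t)))) x := by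
  obtain ⟨hx, hK⟩ := div_ne_zero_iff.1 hxK
  have hlog : HasDerivAt (fun y => log (y / K)) (1 / x) x :=
    (((hasDerivAt_id x).div_const K).log hxK).congr_deriv (by simp only [id]; field_simp)
  exact ((hlog.add_const _).div_const _).congr_deriv (div_div _ _ _)

theorem differentiableAt_bsD1_time (hσ : σ ≠ 0) (htT : t < T) :
    DifferentiableAt ℝ (fun s => bsD1 r σ K T s x) t := by
  have hτ : 0 < T - t := sub_pos.2 htT
  have hvol : σ * √(T - t) ≠ 0 := mul_ne_zero hσ (sqrt_pos.2 hτ).ne'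
  unfold bsD1
  fun_prop (disch := first | exact hvol | exact hτ.ne')

theorem hasDerivAt_bsCall_spot (hσ : σ ≠ 0) (htT : t < T) (hxK : 0 < x / K) :
    HasDerivAt (fun y => bsCall r σ K T t y) (stdGaussianCDF (bsD1 r σ K T t x)) x :=
  (hasDerivAt_mul_comp_sub_mul_comp_sub_of_mul_eq (hasDerivAt_stdGaussianCDF _)
    (hasDerivAt_stdGaussianCDF _) (hasDerivAt_id x) (hasDerivAt_const x _)
    (hasDerivAt_bsD1_spot hxK.ne').differentiableAt (hasDerivAt_const x _)
    (mul_stdGaussianPDF_bsD1 hσ htT hxK)).congr_deriv (by ring)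

theorem hasDerivAt_deriv_bsCall_spot (hσ : σ ≠ 0) (htT : t < T) (hxK : 0 < x / K) :
    HasDerivAt (deriv fun y => bsCall r σ K T t y)
      (stdGaussianPDF (bsD1 r σ K T t x) / (x * (σ * √(T - t)))) x := by
  have hdelta : deriv (fun y => bsCall r σ K T t y) =ᶠ[𝓝 x]
      fun y => stdGaussianCDF (bsD1 r σ K T t y) := by
    have hpos : ∀ᶠ y in 𝓝 x, 0 < y / K :=
      (continuous_id.div_const K).continuousAt.eventually (lt_mem_nhds hxK)
    filter_upwards [hpos] with y hy
    exact (hasDerivAt_bsCall_spot hσ htT hy).deriv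
  refine HasDerivAt.congr_of_eventuallyEq ?_ hdelta
  exact ((hasDerivAt_stdGaussianCDF _).comp x (hasDerivAt_bsD1_spot hxK.ne')).congr_deriv
    (mul_one_div _ _)

theorem hasDerivAt_bsCall_time (hσ : σ ≠ 0) (htT : t < T) (hxK : 0 < x / K) :
    HasDerivAt (fun s => bsCall r σ K T s x)
      (-(r * (K * exp (-(r * (T - t))) * stdGaussianCDF (bsD2 r σ K T t x)))
        - x * stdGaussianPDF (bsD1 r σ K T t x) * (σ / (2 * √(T - t)))) t := by
  have hτ : HasDerivAt (fun s => T - s) (-1) t := (hasDerivAt_id t).const_sub T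
  have hstrike : HasDerivAt (fun s => K * exp (-(r * (T - s))))
      (K * (exp (-(r * (T - t))) * -(r * -1))) t := (hτ.const_mul r).neg.exp.const_mul K
  have hvol : HasDerivAt (fun s => σ * √(T - s)) (σ * (-1 / (2 * √(T - t)))) t :=
    (hτ.sqrt (sub_pos.2 htT).ne').const_mul σ
  refine (hasDerivAt_mul_comp_sub_mul_comp_sub_of_mul_eq (hasDerivAt_stdGaussianCDF _)
    (hasDerivAt_stdGaussianCDF _) (hasDerivAt_const t x) hstrike
    (differentiableAt_bsD1_time hσ htT) hvol (mul_stdGaussianPDF_bsD1 hσ htT hxK)).congr_deriv ?_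
  rw [bsD2]
  ring

-- For `σ < 0` the expression `bsCall` is minus the price of the put with volatility `-σ`.
theorem blackScholes_pde_general (hσ : σ ≠ 0) (htT : t < T) (hxK : 0 < x / K) :
    deriv (fun s => bsCall r σ K T s x) t
      + σ ^ 2 * x ^ 2 / 2 * deriv (deriv (fun y => bsCall r σ K T t y)) x
      + r * x * deriv (fun y => bsCall r σ K T t y) x
      - r * bsCall r σ K T t x = 0 := by
  have hx : x ≠ 0 := (div_ne_zero_iff.1 hxK.ne').1
  have hsqrt : √(T - t) ≠ 0 := (sqrt_pos.2 (sub_pos.2 htT)).ne'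
  have hdiffusion : σ ^ 2 * x ^ 2 / 2 *
      (stdGaussianPDF (bsD1 r σ K T t x) / (x * (σ * √(T - t))))
      = x * stdGaussianPDF (bsD1 r σ K T t x) * (σ / (2 * √(T - t))) := by
    field_simp
  rw [(hasDerivAt_bsCall_time hσ htT hxK).deriv, (hasDerivAt_deriv_bsCall_spot hσ htT hxK).deriv,
    (hasDerivAt_bsCall_spot hσ htT hxK).deriv, hdiffusion, bsCall]
  ring

end BlackScholes

/-- The Black–Scholes call price satisfies the Black–Scholes PDE
`∂C/∂t + (σ² x² / 2) ∂²C/∂x² + r x ∂C/∂x − r C = 0` on `[0,T) × (0,∞)`. -/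
theorem blackScholes_pde (r σ K T : ℝ) (hσ : 0 < σ) (hK : 0 < K) (hT : 0 < T)
    (t x : ℝ) (ht0 : 0 ≤ t) (htT : t < T) (hx : 0 < x) :
    deriv (fun s => bsCall r σ K T s x) t
      + σ ^ 2 * x ^ 2 / 2 * deriv (deriv (fun y => bsCall r σ K T t y)) x
      + r * x * deriv (fun y => bsCall r σ K T t y) x
      - r * bsCall r σ K T t x = 0 :=
  blackScholes_pde_general hσ.ne' htT (div_pos hx hK)
end

section
/- Let κ, θ, σ, h > 0 satisfy κθ ≥ σ²/2, let V > 0 and let Δ ∈ ℝ. Then there exists a unique v > 0 such that v = V + κ(θ − v)h − (σ²/2)h + σ√v · Δ. Equivalently, the quadratic (1 + κh) y² − σΔ y − (V + κθh − (σ²/2)h) = 0 has a unique positive root y, and v = y². Hence the fully implicit Euler step of the Heston volatility scheme preserves positivity. -/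
/-!
In the variable `y = √v` the implicit equation is a quadratic with positive leading coefficient.
Under the Feller condition its constant term is negative for every step size, so its two real roots
have opposite signs, and squaring the positive one gives the only positive solution `v`.
-/

theorem abs_lt_of_discrim_eq_mul_self {K : Type*} [CommRing K] [LinearOrder K]
    [IsStrictOrderedRing K] {a b c s : K} (hac : a * c < 0) (hs : 0 ≤ s)
    (hdiscrim : discrim a b c = s * s) : |b| < s := by
  refine abs_lt_of_sq_lt_sq ?_ hs
  rw [discrim] at hdiscrim
  linarith

theorem pos_and_quadratic_eq_zero_iff {K : Type*} [Field K] [LinearOrder K]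
    [IsStrictOrderedRing K] {a b c s : K} (ha : 0 < a) (hc : c < 0) (hs : 0 ≤ s)
    (hdiscrim : discrim a b c = s * s) (x : K) :
    0 < x ∧ a * (x * x) + b * x + c = 0 ↔ x = (-b + s) / (2 * a) := by
  obtain ⟨hneg, hpos⟩ :=
    abs_lt.mp (abs_lt_of_discrim_eq_mul_self (mul_neg_of_pos_of_neg ha hc) hs hdiscrim)
  have h2a : 0 < 2 * a := by positivity
  have hplus : 0 < (-b + s) / (2 * a) := div_pos (by linarith) h2a
  have hminus : (-b - s) / (2 * a) < 0 := div_neg_of_neg_of_pos (by linarith) h2a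
  rw [quadratic_eq_zero_iff ha.ne' hdiscrim]
  constructor
  · rintro ⟨hx, rfl | rfl⟩
    · rfl
    · exact absurd hx hminus.not_gt
  · rintro rfl
    exact ⟨hplus, Or.inl rfl⟩

theorem existsUnique_pos_quadratic_eq_zero {a b c : ℝ} (ha : 0 < a) (hc : c < 0) :
    ∃! x : ℝ, 0 < x ∧ a * (x * x) + b * x + c = 0 := by
  have hdiscrim : 0 ≤ discrim a b c := by
    rw [discrim]
    linarith [sq_nonneg b, mul_neg_of_pos_of_neg ha hc]
  simp only [pos_and_quadratic_eq_zero_iff ha hc (Real.sqrt_nonneg _)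
    (Real.mul_self_sqrt hdiscrim).symm, existsUnique_eq]

theorem existsUnique_pos_iff_existsUnique_pos_sq {p : ℝ → Prop} :
    (∃! v : ℝ, 0 < v ∧ p v) ↔ ∃! y : ℝ, 0 < y ∧ p (y ^ 2) := by
  constructor
  · rintro ⟨v, ⟨hv, hpv⟩, hunique⟩
    refine ⟨√v, ⟨Real.sqrt_pos.mpr hv, by rwa [Real.sq_sqrt hv.le]⟩, ?_⟩
    rintro y ⟨hy, hpy⟩
    rw [← hunique (y ^ 2) ⟨by positivity, hpy⟩, Real.sqrt_sq hy.le]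
  · rintro ⟨y, ⟨hy, hpy⟩, hunique⟩
    refine ⟨y ^ 2, ⟨by positivity, hpy⟩, ?_⟩
    rintro v ⟨hv, hpv⟩
    rw [← hunique √v ⟨Real.sqrt_pos.mpr hv, by rwa [Real.sq_sqrt hv.le]⟩, Real.sq_sqrt hv.le]

section Heston

variable {κ θ σ h V Δ : ℝ}

theorem heston_implicit_euler_sq_iff {y : ℝ} (hy : 0 ≤ y) :
    y ^ 2 = V + κ * (θ - y ^ 2) * h - σ ^ 2 / 2 * h + σ * √(y ^ 2) * Δ ↔
      (1 + κ * h) * y ^ 2 - σ * Δ * y - (V + κ * θ * h - σ ^ 2 / 2 * h) = 0 := by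
  rw [Real.sqrt_sq hy]
  constructor <;> intro heq <;> linear_combination heq

theorem heston_quadratic_existsUnique_pos (hlead : 0 < 1 + κ * h)
    (hconst : 0 < V + κ * θ * h - σ ^ 2 / 2 * h) :
    ∃! y : ℝ, 0 < y ∧
      (1 + κ * h) * y ^ 2 - σ * Δ * y - (V + κ * θ * h - σ ^ 2 / 2 * h) = 0 := by
  simpa only [sq, neg_mul, ← sub_eq_add_neg] using
    existsUnique_pos_quadratic_eq_zero (b := -(σ * Δ)) hlead (neg_neg_of_pos hconst)

theorem heston_implicit_euler_positivity_general (hlead : 0 < 1 + κ * h)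
    (hconst : 0 < V + κ * θ * h - σ ^ 2 / 2 * h) :
    (∃! v : ℝ, 0 < v ∧
        v = V + κ * (θ - v) * h - σ ^ 2 / 2 * h + σ * √v * Δ) ∧
    (∃! y : ℝ, 0 < y ∧
        (1 + κ * h) * y ^ 2 - σ * Δ * y - (V + κ * θ * h - σ ^ 2 / 2 * h) = 0) ∧
    (∀ y : ℝ, 0 < y →
        (1 + κ * h) * y ^ 2 - σ * Δ * y - (V + κ * θ * h - σ ^ 2 / 2 * h) = 0 →
        0 < y ^ 2 ∧
        y ^ 2 = V + κ * (θ - y ^ 2) * h - σ ^ 2 / 2 * h + σ * √(y ^ 2) * Δ) := by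
  have hroot := heston_quadratic_existsUnique_pos (Δ := Δ) hlead hconst
  refine ⟨?_, hroot, fun y hy hquad ↦
    ⟨pow_pos hy 2, (heston_implicit_euler_sq_iff hy.le).mpr hquad⟩⟩
  rw [existsUnique_pos_iff_existsUnique_pos_sq]
  exact (existsUnique_congr fun y ↦
    and_congr_right fun hy ↦ heston_implicit_euler_sq_iff hy.le).mpr hroot

end Heston

/-- The fully implicit Euler step of the Heston volatility scheme preserves positivity:
under `κθ ≥ σ²/2` there is a unique `v > 0` with
`v = V + κ(θ − v)h − (σ²/2)h + σ√v·Δ`; equivalently, the quadratic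
`(1 + κh) y² − σΔ y − (V + κθh − (σ²/2)h) = 0` has a unique positive root `y`,
and `v = y²` solves the implicit equation. -/
theorem heston_implicit_euler_positivity
    (κ θ σ h : ℝ) (hκ : 0 < κ) (hθ : 0 < θ) (hσ : 0 < σ) (hh : 0 < h)
    (hFeller : σ ^ 2 / 2 ≤ κ * θ) (V : ℝ) (hV : 0 < V) (Δ : ℝ) :
    (∃! v : ℝ, 0 < v ∧
        v = V + κ * (θ - v) * h - σ ^ 2 / 2 * h + σ * Real.sqrt v * Δ) ∧
    (∃! y : ℝ, 0 < y ∧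
        (1 + κ * h) * y ^ 2 - σ * Δ * y - (V + κ * θ * h - σ ^ 2 / 2 * h) = 0) ∧
    (∀ y : ℝ, 0 < y →
        (1 + κ * h) * y ^ 2 - σ * Δ * y - (V + κ * θ * h - σ ^ 2 / 2 * h) = 0 →
        0 < y ^ 2 ∧
        y ^ 2 = V + κ * (θ - y ^ 2) * h - σ ^ 2 / 2 * h
          + σ * Real.sqrt (y ^ 2) * Δ) := by
  have hdrift : σ ^ 2 / 2 * h ≤ κ * θ * h := mul_le_mul_of_nonneg_right hFeller hh.le
  exact heston_implicit_euler_positivity_general (by positivity) (by linarith)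
end
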